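/- (Dyadic recursive inequality) Let n ≥ 1, s ∈ (0,1), q > 1, let K be an admissible kernel, and let u be a nonnegative weak supersolution of L_K u = u^q in ℝⁿ. Set a := n − 2s − n/q and b := 2s + n/q. Then there exists a constant C > 0 such that for every R ≥ 1, S(R) ≤ C R^{a} Σ_{k=0}^{∞} 2^{−kb} S(2^{k+1}R)^{1/q}, where S(ρ) := ∫_{B_ρ} u(x)^q dx. -/

import Mathlib

open MeasureTheory Metric

noncomputable section

abbrev Euc (n : ℕ) := EuclideanSpace ℝ (Fin n)

def IsAdmissibleKernel (n : ℕ) (s lam Lam : ℝ) (K : Euc n → ℝ) : Prop :=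
  0 < lam ∧ lam ≤ Lam ∧ Measurable K ∧
  (∀ z : Euc n, z ≠ 0 → K z = K (-z)) ∧
  (∀ z : Euc n, z ≠ 0 →
    lam * ‖z‖ ^ (-(n : ℝ) - 2 * s) ≤ K z ∧ K z ≤ Lam * ‖z‖ ^ (-(n : ℝ) - 2 * s))

def LK (n : ℕ) (K φ : Euc n → ℝ) (x : Euc n) : ℝ :=
  (1 / 2) * ∫ z : Euc n, (2 * φ x - φ (x + z) - φ (x - z)) * K z

def IsTestFun (n : ℕ) (φ : Euc n → ℝ) : Prop :=
  ContDiff ℝ (⊤ : ℕ∞) φ ∧ HasCompactSupport φ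

def MemL1Tail (n : ℕ) (s : ℝ) (u : Euc n → ℝ) : Prop :=
  LocallyIntegrable u volume ∧
  Integrable (fun x : Euc n => |u x| * (1 + ‖x‖) ^ (-(n : ℝ) - 2 * s)) volume

def MemLqLoc (n : ℕ) (q : ℝ) (u : Euc n → ℝ) : Prop :=
  ∀ R : ℝ, 0 < R → IntegrableOn (fun x : Euc n => u x ^ q) (ball (0 : Euc n) R) volume

def IsWeakSupersol (n : ℕ) (s q : ℝ) (K u : Euc n → ℝ) : Prop :=
  Measurable u ∧ (∀ x, 0 ≤ u x) ∧ MemLqLoc n q u ∧ MemL1Tail n s u ∧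
  ∀ φ : Euc n → ℝ, IsTestFun n φ → (∀ x, 0 ≤ φ x) →
    (∫ x : Euc n, u x ^ q * φ x) ≤ ∫ x : Euc n, u x * LK n K φ x

def IsCutoff (n : ℕ) (η : Euc n → ℝ) : Prop :=
  ContDiff ℝ (⊤ : ℕ∞) η ∧ (∀ x, 0 ≤ η x ∧ η x ≤ 1) ∧
  (∀ x : Euc n, ‖x‖ ≤ 1 → η x = 1) ∧ (∀ x : Euc n, 2 ≤ ‖x‖ → η x = 0)

def cutoffSq (n : ℕ) (η : Euc n → ℝ) (R : ℝ) : Euc n → ℝ :=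
  fun x => (η (R⁻¹ • x)) ^ 2

lemma aux_integral_le {α : Type*} [MeasurableSpace α] {μ : Measure α} {f g : α → ℝ}
    (hg : Integrable g μ) (hg0 : ∀ x, 0 ≤ g x) (h : ∀ x, f x ≤ g x) :
    ∫ x, f x ∂μ ≤ ∫ x, g x ∂μ := by
  by_cases hf : Integrable f μ
  · exact integral_mono hf hg h
  · rw [integral_undef hf]; exact integral_nonneg hg0

lemma aux_second_diff (n : ℕ) (ψ : Euc n → ℝ) (h1 : ContDiff ℝ (⊤ : ℕ∞) ψ)
    (h2 : HasCompactSupport ψ) :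
    ∃ M : ℝ, 0 ≤ M ∧ ∀ y w : Euc n, 2 * ψ y - ψ (y + w) - ψ (y - w) ≤ M * ‖w‖ ^ 2 := by
  have hd : ContDiff ℝ 1 (fderiv ℝ ψ) := h1.fderiv_right (by norm_cast)
  obtain ⟨M, hM⟩ := ContDiff.lipschitzWith_of_hasCompactSupport (h2.fderiv ℝ) hd (by simp)
  have hdiff : Differentiable ℝ ψ := h1.differentiable (by simp)
  refine ⟨2 * M, by positivity, fun y w => ?_⟩
  have key := (convex_Icc (0:ℝ) 1).norm_image_sub_le_of_norm_hasDerivWithin_le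
    (f := fun t => ψ (y + t • w) + ψ (y - t • w))
    (f' := fun t => fderiv ℝ ψ (y + t • w) w - fderiv ℝ ψ (y - t • w) w)
    (C := 2 * M * ‖w‖ ^ 2) (x := 0) (y := 1) ?_ ?_ (by simp) (by simp)
  · simp only [one_smul, zero_smul, add_zero, sub_zero, norm_one, mul_one, Real.norm_eq_abs] at key
    have := (abs_le.1 key).1
    linarith
  · intro t _
    have e1 : HasDerivAt (fun t : ℝ => y + t • w) w t := by
      simpa using ((hasDerivAt_id t).smul_const w).const_add y
    have e2 : HasDerivAt (fun t : ℝ => y - t • w) (-w) t := by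
      simpa using ((hasDerivAt_id t).smul_const w).const_sub y
    have f1 := (hdiff (y + t • w)).hasFDerivAt.comp_hasDerivAt t e1
    have f2 := (hdiff (y - t • w)).hasFDerivAt.comp_hasDerivAt t e2
    have := (f1.add f2).hasDerivWithinAt (s := Set.Icc (0:ℝ) 1)
    simpa [sub_eq_add_neg] using! this
  · intro t ht
    rw [← ContinuousLinearMap.sub_apply]
    refine (ContinuousLinearMap.le_opNorm _ _).trans ?_
    have := hM.dist_le_mul (y + t • w) (y - t • w)
    rw [dist_eq_norm, dist_eq_norm] at this
    have e : y + t • w - (y - t • w) = (2 * t) • w := by module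
    rw [e, norm_smul, Real.norm_eq_abs, abs_of_nonneg (by linarith [ht.1])] at this
    have h3 : (M:ℝ) * (2 * t * ‖w‖) ≤ M * (2 * ‖w‖) := by
      have := ht.2
      gcongr
      linarith
    calc _ ≤ (M * (2 * ‖w‖)) * ‖w‖ := by gcongr; exact this.trans h3
      _ = _ := by ring

lemma aux_g_int (n : ℕ) (hn : 1 ≤ n) (s : ℝ) (hs : s ∈ Set.Ioo (0 : ℝ) 1) (M : ℝ) (hM : 0 ≤ M) :
    Integrable (fun w : Euc n => min 2 (M * ‖w‖ ^ 2) * ‖w‖ ^ (-(n : ℝ) - 2 * s)) := by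
  haveI : Nonempty (Fin n) := ⟨⟨0, hn⟩⟩
  obtain ⟨hs0, hs1⟩ := hs
  rw [integrable_fun_norm_addHaar volume (E := Euc n)
    (f := fun r => min 2 (M * r ^ 2) * r ^ (-(n : ℝ) - 2 * s))]
  simp only [finrank_euclideanSpace, Fintype.card_fin, smul_eq_mul]
  have e : ∀ r : ℝ, 0 < r → r ^ (n - 1) * (min 2 (M * r ^ 2) * r ^ (-(n : ℝ) - 2 * s))
      = min 2 (M * r ^ 2) * r ^ (-1 - 2 * s) := by
    intro r hr
    have : (r ^ (n - 1) : ℝ) = r ^ ((n : ℝ) - 1) := by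
      rw [← Real.rpow_natCast, Nat.cast_sub hn]; simp
    rw [this, mul_left_comm, ← Real.rpow_add hr]
    congr 2; ring
  have meas : Measurable (fun r : ℝ => min 2 (M * r ^ 2) * r ^ (-1 - 2 * s)) := by fun_prop
  rw [integrableOn_congr_fun (s := Set.Ioi 0) (fun r hr => e r hr) measurableSet_Ioi]
  rw [← Set.Ioc_union_Ioi_eq_Ioi (zero_le_one : (0:ℝ) ≤ 1)]
  refine IntegrableOn.union ?_ ?_
  · have h : IntegrableOn (fun r : ℝ => M * r ^ (1 - 2 * s)) (Set.Ioc 0 1) := by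
      have := intervalIntegral.intervalIntegrable_rpow' (a := 0) (b := 1) (r := 1 - 2 * s)
        (by linarith)
      exact ((intervalIntegrable_iff_integrableOn_Ioc_of_le zero_le_one).1 this).const_mul M
    refine Integrable.mono' h meas.aestronglyMeasurable ?_
    refine (ae_restrict_iff' measurableSet_Ioc).2 (Filter.Eventually.of_forall fun r hr => ?_)
    have hr0 := hr.1
    rw [Real.norm_of_nonneg (by positivity)]
    calc _ ≤ (M * r ^ 2) * r ^ (-1 - 2 * s) := by gcongr; exact min_le_right _ _
      _ = _ := by
        rw [mul_assoc, ← Real.rpow_natCast, ← Real.rpow_add hr0]; congr 2; push_cast; ring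
  · have h : IntegrableOn (fun r : ℝ => 2 * r ^ (-1 - 2 * s)) (Set.Ioi 1) :=
      (integrableOn_Ioi_rpow_of_lt (by linarith) zero_lt_one).const_mul 2
    refine Integrable.mono' h meas.aestronglyMeasurable ?_
    refine (ae_restrict_iff' measurableSet_Ioi).2 (Filter.Eventually.of_forall fun r hr => ?_)
    have hr0 : (0:ℝ) < r := zero_lt_one.trans hr
    rw [Real.norm_of_nonneg (by positivity)]
    gcongr; exact min_le_left _ _

/-- Pointwise upper bound for the operator on rescaled cutoffs. -/
lemma aux_LK (n : ℕ) (hn : 1 ≤ n) (s : ℝ) (hs : s ∈ Set.Ioo (0 : ℝ) 1)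
    (lam Lam : ℝ) (K : Euc n → ℝ) (hK : IsAdmissibleKernel n s lam Lam K)
    (ψ : Euc n → ℝ) (h1 : ContDiff ℝ (⊤ : ℕ∞) ψ) (h2 : HasCompactSupport ψ)
    (h01 : ∀ x, 0 ≤ ψ x ∧ ψ x ≤ 1) :
    ∃ A : ℝ, 0 ≤ A ∧ ∀ R : ℝ, 0 < R → ∀ x,
      LK n K (fun x => ψ (R⁻¹ • x)) x ≤ A * R ^ (-(2 * s)) := by
  obtain ⟨M, hM, hψ⟩ := aux_second_diff n ψ h1 h2
  obtain ⟨hl, hL, -, -, hb⟩ := hK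
  have hLam : 0 ≤ Lam := hl.le.trans hL
  have hg := aux_g_int n hn s hs M hM
  set g : Euc n → ℝ := fun w => min 2 (M * ‖w‖ ^ 2) * ‖w‖ ^ (-(n : ℝ) - 2 * s) with hgdef
  have hg0 : ∀ w, 0 ≤ g w := fun w => by simp only [hgdef]; positivity
  refine ⟨1 / 2 * (Lam * ∫ w, g w),
    mul_nonneg (by norm_num) (mul_nonneg hLam (integral_nonneg hg0)),
    fun R hR x => ?_⟩
  unfold LK
  set F : Euc n → ℝ := fun z => (2 * ψ (R⁻¹ • x) - ψ (R⁻¹ • (x + z)) - ψ (R⁻¹ • (x - z))) * K z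
  have hsc := Measure.integral_comp_smul (volume : Measure (Euc n)) F R
  simp only [finrank_euclideanSpace, Fintype.card_fin, smul_eq_mul] at hsc
  rw [abs_of_pos (by positivity)] at hsc
  have hF : ∫ z, F z = R ^ n * ∫ w, F (R • w) := by rw [hsc]; field_simp
  have hpt : ∀ w, F (R • w) ≤ (Lam * R ^ (-(n : ℝ) - 2 * s)) * g w := by
    intro w
    by_cases hw : w = 0
    · have : F (R • w) = 0 := by simp only [F, hw]; simp; left; ring
      rw [this]; have := hg0 w; positivity
    have hRw : R • w ≠ 0 := smul_ne_zero hR.ne' hw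
    obtain ⟨k1, k2⟩ := hb _ hRw
    have k0 : 0 ≤ K (R • w) := le_trans (by positivity) k1
    rw [norm_smul, Real.norm_of_nonneg hR.le, Real.mul_rpow hR.le (norm_nonneg _)] at k2
    have hd : 2 * ψ (R⁻¹ • x) - ψ (R⁻¹ • (x + R • w)) - ψ (R⁻¹ • (x - R • w))
        ≤ min 2 (M * ‖w‖ ^ 2) := by
      refine le_min ?_ ?_
      · linarith [(h01 (R⁻¹ • x)).2, (h01 (R⁻¹ • (x + R • w))).1, (h01 (R⁻¹ • (x - R • w))).1]
      · have := hψ (R⁻¹ • x) w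
        rwa [smul_add, smul_sub, inv_smul_smul₀ hR.ne']
    calc F (R • w) ≤ min 2 (M * ‖w‖ ^ 2) * K (R • w) := by
          simp only [F]; gcongr
      _ ≤ min 2 (M * ‖w‖ ^ 2) * (Lam * (R ^ (-(n : ℝ) - 2 * s) * ‖w‖ ^ (-(n : ℝ) - 2 * s))) := by
          gcongr
      _ = _ := by simp only [hgdef]; ring
  have hI := aux_integral_le (hg.const_mul (Lam * R ^ (-(n : ℝ) - 2 * s)))
    (fun w => by have := hg0 w; positivity) hpt
  rw [integral_const_mul] at hI
  change 1 / 2 * ∫ z, F z ≤ _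
  rw [hF]
  have hp : (R ^ n : ℝ) * R ^ (-(n : ℝ) - 2 * s) = R ^ (-(2 * s)) := by
    rw [← Real.rpow_natCast, ← Real.rpow_add hR]; congr 1; ring
  calc _ ≤ 1 / 2 * (R ^ n * (Lam * R ^ (-(n : ℝ) - 2 * s) * ∫ w, g w)) := by gcongr
    _ = 1 / 2 * (Lam * ∫ w, g w) * (R ^ n * R ^ (-(n : ℝ) - 2 * s)) := by ring
    _ = _ := by rw [hp]

lemma aux_LK_nonpos (n : ℕ) (s : ℝ)
    (lam Lam : ℝ) (K : Euc n → ℝ) (hK : IsAdmissibleKernel n s lam Lam K)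
    (φ : Euc n → ℝ) (h0 : ∀ x, 0 ≤ φ x) (x : Euc n) (hx : φ x = 0) : LK n K φ x ≤ 0 := by
  obtain ⟨hl, hL, -, -, hb⟩ := hK
  have : ∫ z : Euc n, (2 * φ x - φ (x + z) - φ (x - z)) * K z ≤ 0 := by
    refine integral_nonpos fun z => ?_
    by_cases hz : z = 0
    · simp [hz, hx]
    · have k0 : 0 ≤ K z := le_trans (by positivity) (hb z hz).1
      refine mul_nonpos_of_nonpos_of_nonneg ?_ k0
      rw [hx]; linarith [h0 (x + z), h0 (x - z)]
  unfold LK; linarith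

lemma aux_holder (n : ℕ) (q : ℝ) (hq : 1 < q) (u : Euc n → ℝ) (hu0 : ∀ x, 0 ≤ u x)
    (hum : Measurable u) (ρ : ℝ)
    (hi : IntegrableOn (fun x => u x ^ q) (ball (0 : Euc n) ρ)) :
    IntegrableOn u (ball (0 : Euc n) ρ) ∧
    ∫ x in ball (0 : Euc n) ρ, u x ≤ (∫ x in ball (0 : Euc n) ρ, u x ^ q) ^ (1 / q) *
      (volume.real (ball (0 : Euc n) ρ)) ^ (1 - 1 / q) := by
  have hpq := Real.HolderConjugate.conjExponent hq
  haveI : IsFiniteMeasure (volume.restrict (ball (0 : Euc n) ρ)) :=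
    ⟨by simpa using measure_ball_lt_top⟩
  have hmem : MemLp u (ENNReal.ofReal q) (volume.restrict (ball (0 : Euc n) ρ)) := by
    rw [← integrable_norm_rpow_iff hum.aestronglyMeasurable (by simp; linarith) (by simp)]
    rw [ENNReal.toReal_ofReal (by linarith)]
    refine hi.congr (Filter.Eventually.of_forall fun x => ?_)
    simp [Real.norm_of_nonneg (hu0 x), abs_of_nonneg (hu0 x)]
  refine ⟨hmem.integrable (by simpa using hq.le), ?_⟩
  have := integral_mul_le_Lp_mul_Lq_of_nonneg hpq
    (μ := volume.restrict (ball (0 : Euc n) ρ)) (f := u) (g := fun _ => (1:ℝ))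
    (Filter.Eventually.of_forall hu0) (Filter.Eventually.of_forall fun _ => zero_le_one)
    hmem (memLp_const 1)
  simp only [mul_one, Real.one_rpow, integral_const, smul_eq_mul] at this
  have e : 1 / q.conjExponent = 1 - 1 / q := by
    have := hpq.inv_add_inv_eq_one
    simp only [one_div]; linarith
  rw [e] at this
  simpa [Measure.real] using this

/-- Dyadic recursive inequality, Lemma 3.2: with `a = n - 2s - n/q` and
`b = 2s + n/q`, `S(R) ≤ C R^a Σ_{k≥0} 2^{-kb} S(2^{k+1}R)^{1/q}` for all `R ≥ 1`.
The series is taken in `ℝ≥0∞` (it may be `+∞`, in which case the bound is trivial). -/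
theorem dyadic_recursive_inequality
    (n : ℕ) (hn : 1 ≤ n) (s : ℝ) (hs : s ∈ Set.Ioo (0 : ℝ) 1)
    (q : ℝ) (hq : 1 < q)
    (lam Lam : ℝ) (K : Euc n → ℝ) (hK : IsAdmissibleKernel n s lam Lam K)
    (u : Euc n → ℝ) (hu : IsWeakSupersol n s q K u) :
    ∃ C : ℝ, 0 < C ∧ ∀ R : ℝ, 1 ≤ R →
      ENNReal.ofReal (∫ x in ball (0 : Euc n) R, u x ^ q) ≤
        ENNReal.ofReal (C * R ^ ((n : ℝ) - 2 * s - (n : ℝ) / q)) *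
          ∑' k : ℕ, ENNReal.ofReal
            ((2 : ℝ) ^ (-(k : ℝ) * (2 * s + (n : ℝ) / q)) *
              (∫ x in ball (0 : Euc n) ((2 : ℝ) ^ (k + 1) * R), u x ^ q) ^ (1 / q)) := by
  obtain ⟨hum, hu0, huq, -, hsup⟩ := hu
  let bmp : ContDiffBump (0 : Euc n) := ⟨1, 2, one_pos, one_lt_two⟩
  have hb1 : ContDiff ℝ (⊤ : ℕ∞) (bmp : Euc n → ℝ) := bmp.contDiff
  have hb2 : HasCompactSupport (bmp : Euc n → ℝ) := bmp.hasCompactSupport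
  have hb01 : ∀ x, 0 ≤ bmp x ∧ bmp x ≤ 1 := fun x => ⟨bmp.nonneg, bmp.le_one⟩
  obtain ⟨A, hA, hLK⟩ := aux_LK n hn s hs lam Lam K hK bmp hb1 hb2 hb01
  have hq0 : 0 < q := by linarith
  set V : ℝ := volume.real (ball (0 : Euc n) 1) with hV
  have hV0 : 0 ≤ V := measureReal_nonneg
  refine ⟨A * ((2 : ℝ) ^ n * V) ^ (1 - 1 / q) + 1, by positivity, fun R hR1 => ?_⟩
  have hR : 0 < R := by linarith
  set φ : Euc n → ℝ := fun x => bmp (R⁻¹ • x) with hφ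
  have hφ0 : ∀ x, 0 ≤ φ x := fun x => (hb01 _).1
  have hφ1 : ∀ x, φ x ≤ 1 := fun x => (hb01 _).2
  have hφc : ContDiff ℝ (⊤ : ℕ∞) φ := hb1.comp (contDiff_const_smul _)
  have hnorm : ∀ x : Euc n, ‖R⁻¹ • x‖ = R⁻¹ * ‖x‖ := fun x => by
    rw [norm_smul, Real.norm_of_nonneg (by positivity)]
  have hφin : ∀ x ∈ ball (0 : Euc n) R, φ x = 1 := fun x hx => by
    apply bmp.one_of_mem_closedBall
    rw [mem_closedBall_zero_iff, hnorm]
    rw [mem_ball_zero_iff] at hx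
    change R⁻¹ * ‖x‖ ≤ 1
    rw [inv_mul_le_iff₀ hR]; linarith
  have hφout : ∀ x ∉ ball (0 : Euc n) (2 * R), φ x = 0 := fun x hx => by
    apply bmp.zero_of_le_dist
    rw [dist_zero_right, hnorm]
    rw [mem_ball_zero_iff, not_lt] at hx
    change 2 ≤ R⁻¹ * ‖x‖
    rw [le_inv_mul_iff₀ hR]; linarith
  have hφt : IsTestFun n φ := by
    refine ⟨hφc, HasCompactSupport.intro (isCompact_closedBall (0 : Euc n) (2 * R)) ?_⟩
    exact fun x hx => hφout x fun h => hx (ball_subset_closedBall h)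
  have hS := hsup φ hφt hφ0
  have hi := huq (2 * R) (by positivity)
  obtain ⟨hui, hhol⟩ := aux_holder n q hq u hu0 hum (2 * R) hi
  -- left side
  have hleft : ∫ x in ball (0 : Euc n) R, u x ^ q ≤ ∫ x, u x ^ q * φ x := by
    rw [← integral_indicator measurableSet_ball]
    have hint : Integrable (fun x => u x ^ q * φ x) := by
      refine Integrable.mono' (hi.integrable_indicator measurableSet_ball)
        ((hum.pow_const q).mul hφc.continuous.measurable).aestronglyMeasurable
        (Filter.Eventually.of_forall fun x => ?_)
      have h0 := Real.rpow_nonneg (hu0 x) q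
      rw [Real.norm_of_nonneg (mul_nonneg h0 (hφ0 x))]
      by_cases hx : x ∈ ball (0 : Euc n) (2 * R)
      · rw [Set.indicator_of_mem hx]; exact mul_le_of_le_one_right h0 (hφ1 x)
      · rw [Set.indicator_of_notMem hx, hφout x hx, mul_zero]
    refine aux_integral_le hint (fun x => mul_nonneg (Real.rpow_nonneg (hu0 x) q) (hφ0 x)) ?_
    intro x
    by_cases hx : x ∈ ball (0 : Euc n) R
    · rw [Set.indicator_of_mem hx, hφin x hx, mul_one]
    · rw [Set.indicator_of_notMem hx]; exact mul_nonneg (Real.rpow_nonneg (hu0 x) q) (hφ0 x)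
  have hright : ∫ x, u x * LK n K φ x ≤
      (∫ x in ball (0 : Euc n) (2 * R), u x) * (A * R ^ (-(2 * s))) := by
    rw [← integral_mul_const, ← integral_indicator measurableSet_ball]
    refine aux_integral_le ?_ ?_ ?_
    · exact (integrable_indicator_iff measurableSet_ball).2 (hui.mul_const _)
    · exact fun x => Set.indicator_nonneg (fun x _ => mul_nonneg (hu0 x) (by positivity)) x
    · intro x
      by_cases hx : x ∈ ball (0 : Euc n) (2 * R)
      · rw [Set.indicator_of_mem hx]
        exact mul_le_mul_of_nonneg_left (hLK R hR x) (hu0 x)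
      · rw [Set.indicator_of_notMem hx]
        exact mul_nonpos_of_nonneg_of_nonpos (hu0 x)
          (aux_LK_nonpos n s lam Lam K hK φ hφ0 x (hφout x hx))
  set T : ℝ := (∫ x in ball (0 : Euc n) (2 * R), u x ^ q) ^ (1 / q) with hT
  have hT0 : 0 ≤ T := Real.rpow_nonneg (integral_nonneg fun x => Real.rpow_nonneg (hu0 x) q) _
  have hvol : volume.real (ball (0 : Euc n) (2 * R)) = ((2:ℝ) ^ n * V) * R ^ n := by
    rw [hV, measureReal_def, Measure.addHaar_ball_of_pos _ _ (by positivity : (0:ℝ) < 2 * R),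
      ENNReal.toReal_mul, ENNReal.toReal_ofReal (by positivity), ← measureReal_def]
    simp only [finrank_euclideanSpace, Fintype.card_fin]
    rw [mul_pow]; ring
  have hpow : (R ^ n : ℝ) ^ (1 - 1 / q) * R ^ (-(2 * s)) = R ^ ((n : ℝ) - 2 * s - (n : ℝ) / q) := by
    rw [← Real.rpow_natCast, ← Real.rpow_mul hR.le, ← Real.rpow_add hR]
    congr 1; field_simp; ring
  have hmain : ∫ x in ball (0 : Euc n) R, u x ^ q ≤
      ((A * ((2 : ℝ) ^ n * V) ^ (1 - 1 / q) + 1) * R ^ ((n : ℝ) - 2 * s - (n : ℝ) / q)) * T := by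
    calc _ ≤ (∫ x in ball (0 : Euc n) (2 * R), u x) * (A * R ^ (-(2 * s))) :=
          hleft.trans (hS.trans hright)
      _ ≤ (T * (((2:ℝ) ^ n * V) * R ^ n) ^ (1 - 1 / q)) * (A * R ^ (-(2 * s))) := by
          rw [← hvol]; gcongr
      _ = (A * ((2 : ℝ) ^ n * V) ^ (1 - 1 / q)) * ((R ^ n : ℝ) ^ (1 - 1 / q) * R ^ (-(2 * s))) * T := by
          rw [Real.mul_rpow (by positivity) (by positivity)]; ring
      _ ≤ _ := by rw [hpow]; gcongr; linarith
  refine (ENNReal.ofReal_le_ofReal hmain).trans ?_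
  rw [ENNReal.ofReal_mul (by positivity)]
  gcongr
  refine le_trans (le_of_eq ?_) (ENNReal.le_tsum 0)
  simp [hT]
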